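/- Let a_0(n), a_1(n) be convergent sequences satisfying 2a_0(n) + a_1(n) = 1, a_0(n) ≥ 0, and a_0(n) + a_1(n) ≥ 0 for all n, with limits l_0 = lim a_0(n) and l_1 = lim a_1(n). If f is twice continuously differentiable on [0,1], then n(D_n^{M,1}(f; x) − f(x)) converges, uniformly on [0,1], to (1 − 2x)(2l_1 + 3l_0) f′(x) + x(1 − x)(2l_0 + l_1) f″(x) as n → ∞. -/

import Mathlib

open Filter Topology

/-- Bernstein basis polynomial `p_{n,k}(x)`, zero when `k < 0` or `k > n`. -/
noncomputable def bern (n : ℕ) (k : ℤ) (x : ℝ) : ℝ :=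
  if 0 ≤ k ∧ k ≤ (n : ℤ) then (n.choose k.toNat : ℝ) * x ^ k.toNat * (1 - x) ^ (n - k.toNat)
  else 0

/-- Modified Bernstein basis `p_{n,k}^{M,1}(x)` of Khosravian-Arab et al. -/
noncomputable def pM1 (a0 a1 : ℕ → ℝ) (n : ℕ) (k : ℤ) (x : ℝ) : ℝ :=
  (a1 n * x + a0 n) * bern (n - 1) k x + (a1 n * (1 - x) + a0 n) * bern (n - 1) (k - 1) x

/-- First-order modified Durrmeyer operator `D_n^{M,1}(f;x)`. -/
noncomputable def DM1 (a0 a1 : ℕ → ℝ) (n : ℕ) (f : ℝ → ℝ) (x : ℝ) : ℝ :=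
  ((n : ℝ) + 1) * ∑ k ∈ Finset.range (n + 1),
    pM1 a0 a1 n k x * ∫ t in (0:ℝ)..1, bern n k t * f t

/-!
The modified operator is a combination `a(x, n) J₀₁ + a(1 - x, n) J₁₀`, with weights summing to
`2 a₀(n) + a₁(n) = 1`, of Bernstein–Durrmeyer operators of degree `n - 1` with the Jacobi weights
`1 - t` and `t`. Each Jacobi–Durrmeyer operator has the Voronovskaja limit
`(α + 1 - (α + β + 2) x) f' + x (1 - x) f''`, so the claim follows by combining two such limits.

By Taylor expansion, a Voronovskaja formula for integrals against probability measures on a compact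
interval holds for every `C²` function as soon as it holds for `1, t, …, t⁴`. For the
Jacobi–Durrmeyer operators it holds for all monomials by induction on the degree: multiplying the
kernel with parameters `(α, β)` by `t` gives a combination of the kernels with parameters
`(α + 1, β)` and `(α + 2, β)`.
-/

open MeasureTheory Set

section UniformConvergence

variable {ι X : Type*} {l : Filter ι} {s : Set X}

lemma tendstoUniformlyOn_self {Y : Type*} [UniformSpace Y] (f : X → Y) :
    TendstoUniformlyOn (fun _ : ι => f) f l s :=
  fun _ hu => .of_forall fun _ _ _ => refl_mem_uniformity hu

lemma tendstoUniformlyOn_finsetSum {κ E : Type*} [UniformSpace E] [AddCommGroup E]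
    [IsUniformAddGroup E] {T : Finset κ} {F : κ → ι → X → E} {f : κ → X → E}
    (h : ∀ j ∈ T, TendstoUniformlyOn (F j) (f j) l s) :
    TendstoUniformlyOn (fun i x => ∑ j ∈ T, F j i x) (fun x => ∑ j ∈ T, f j x) l s := by
  classical
  induction T using Finset.induction_on with
  | empty => simpa using tendstoUniformlyOn_self fun _ => (0 : E)
  | insert j T hj ih =>
    simp only [Finset.sum_insert hj]
    exact (h j (T.mem_insert_self j)).fun_add
      (ih fun k hk => h k (Finset.mem_insert_of_mem hk))

lemma tendstoUniformlyOn_add_one_iff {Y : Type*} [UniformSpace Y] {F : ℕ → X → Y} {f : X → Y} :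
    TendstoUniformlyOn (fun n => F (n + 1)) f atTop s ↔ TendstoUniformlyOn F f atTop s :=
  forall₂_congr fun u _ => by
    conv_rhs => rw [← map_add_atTop_eq_nat 1, eventually_map]

lemma tendstoUniformlyOn_mul_of_isCompact [TopologicalSpace X] {M : Type*}
    [PseudoMetricSpace M] [Zero M] [Mul M] [IsBoundedSMul M M] {F G : ι → X → M} {f g : X → M}
    (hs : IsCompact s) (hF : TendstoUniformlyOn F f l s) (hG : TendstoUniformlyOn G g l s)
    (hf : ContinuousOn f s) (hg : ContinuousOn g s) :
    TendstoUniformlyOn (fun i x => F i x * G i x) (fun x => f x * g x) l s :=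
  (tendstoLocallyUniformlyOn_iff_tendstoUniformlyOn_of_compact hs).mp
    (hF.tendstoLocallyUniformlyOn.fun_mul₀ hG.tendstoLocallyUniformlyOn hf hg)

lemma tendstoUniformlyOn_continuousOn_mul [TopologicalSpace X] {M : Type*}
    [PseudoMetricSpace M] [Zero M] [Mul M] [IsBoundedSMul M M] {F : ι → X → M} {c f : X → M}
    (hs : IsCompact s) (hc : ContinuousOn c s) (hF : TendstoUniformlyOn F f l s)
    (hf : ContinuousOn f s) :
    TendstoUniformlyOn (fun i x => c x * F i x) (fun x => c x * f x) l s :=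
  tendstoUniformlyOn_mul_of_isCompact hs (tendstoUniformlyOn_self c) hF hc hf

lemma tendstoUniformlyOn_mul_add_of_tendsto [TopologicalSpace X] {u v : ι → ℝ} {p q : ℝ}
    {c : X → ℝ} (hs : IsCompact s) (hu : Tendsto u l (𝓝 p)) (hv : Tendsto v l (𝓝 q))
    (hc : ContinuousOn c s) :
    TendstoUniformlyOn (fun i x => u i * c x + v i) (fun x => p * c x + q) l s :=
  (tendstoUniformlyOn_mul_of_isCompact hs (hu.tendstoUniformlyOn_const s)
    (tendstoUniformlyOn_self c) continuousOn_const hc).fun_add (hv.tendstoUniformlyOn_const s)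

lemma tendstoUniformlyOn_of_atTop_mul_sub [TopologicalSpace X] {r : ι → ℝ}
    {F : ι → X → ℝ} {f g : X → ℝ} (hs : IsCompact s) (hr : Tendsto r l atTop)
    (hg : ContinuousOn g s) (h : TendstoUniformlyOn (fun i x => r i * (F i x - f x)) g l s) :
    TendstoUniformlyOn F f l s := by
  have hdiff : TendstoUniformlyOn (fun i x => (r i)⁻¹ * (r i * (F i x - f x)))
      (fun x => 0 * g x) l s :=
    tendstoUniformlyOn_mul_of_isCompact hs (hr.inv_tendsto_atTop.tendstoUniformlyOn_const s) h
      continuousOn_const hg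
  refine ((hdiff.fun_add (tendstoUniformlyOn_self f)).congr ?_).congr_right fun x _ => ?_
  · filter_upwards [hr.eventually_ne_atTop 0] with i hi x _
    simp [inv_mul_cancel_left₀ hi]
  · simp

lemma exists_eventually_abs_le_of_tendstoUniformlyOn [TopologicalSpace X] {F : ι → X → ℝ}
    {f : X → ℝ} (hs : IsCompact s) (hf : ContinuousOn f s) (hF : TendstoUniformlyOn F f l s) :
    ∃ M > 0, ∀ᶠ i in l, ∀ x ∈ s, |F i x| ≤ M := by
  obtain ⟨M, hM⟩ := hs.exists_bound_of_continuousOn hf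
  refine ⟨|M| + 1, by positivity, ?_⟩
  filter_upwards [Metric.tendstoUniformlyOn_iff.mp hF 1 one_pos] with i hi x hx
  calc |F i x| ≤ |f x| + |f x - F i x| := by
        simpa [abs_sub_comm] using abs_sub (f x) (f x - F i x)
    _ ≤ |M| + 1 := add_le_add ((hM x hx).trans (le_abs_self M)) (hi x hx).le

lemma tendstoUniformlyOn_zero_of_abs_le {E A B : ι → X → ℝ}
    (hA : ∃ M > 0, ∀ᶠ i in l, ∀ x ∈ s, |A i x| ≤ M)
    (hB : TendstoUniformlyOn B (fun _ => 0) l s)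
    (hE : ∀ η > 0, ∃ C ≥ 0, ∀ i, ∀ x ∈ s, |E i x| ≤ η * |A i x| + C * |B i x|) :
    TendstoUniformlyOn E (fun _ => 0) l s := by
  rw [Metric.tendstoUniformlyOn_iff] at hB ⊢
  intro ε hε
  obtain ⟨M, hM, hAM⟩ := hA
  obtain ⟨C, hC, hEC⟩ := hE (ε / (2 * M)) (by positivity)
  filter_upwards [hAM, hB (ε / (2 * (C + 1))) (by positivity)] with i hAi hBi x hx
  have hBx : |B i x| < ε / (2 * (C + 1)) := by simpa [Real.dist_eq] using hBi x hx
  have hAx : ε / (2 * M) * |A i x| ≤ ε / 2 := by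
    calc ε / (2 * M) * |A i x| ≤ ε / (2 * M) * M := by gcongr; exact hAi x hx
      _ = ε / 2 := by field_simp
  have hCB : C * |B i x| < ε / 2 := by
    calc C * |B i x| ≤ (C + 1) * |B i x| := by gcongr; linarith
      _ < (C + 1) * (ε / (2 * (C + 1))) := by gcongr
      _ = ε / 2 := by field_simp
  rw [Real.dist_eq, zero_sub, abs_neg]
  linarith [hEC i x hx]

end UniformConvergence

section Taylor

variable {s : Set ℝ} {f f' f'' : ℝ → ℝ}

lemma abs_sub_taylor_two_le [s.OrdConnected] (hf' : ∀ y ∈ s, HasDerivWithinAt f (f' y) s y)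
    (hf'' : ∀ y ∈ s, HasDerivWithinAt f' (f'' y) s y) {x t η : ℝ} (hx : x ∈ s) (ht : t ∈ s)
    (hη : ∀ u ∈ uIcc x t, |f'' u - f'' x| ≤ η) :
    |f t - f x - f' x * (t - x) - f'' x / 2 * (t - x) ^ 2| ≤ η * (t - x) ^ 2 := by
  have hsub : uIcc x t ⊆ s := OrdConnected.uIcc_subset ‹_› hx ht
  have hη0 : 0 ≤ η := (abs_nonneg _).trans (hη x left_mem_uIcc)
  have hfirst : ∀ u ∈ uIcc x t, ‖f' u - f' x - f'' x * (u - x)‖ ≤ η * |t - x| := by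
    intro u hu
    have hderiv : ∀ v ∈ uIcc x t, HasDerivWithinAt (fun v => f' v - f'' x * v)
        (f'' v - f'' x) (uIcc x t) v := fun v hv => by
      simpa using ((hf'' v (hsub hv)).mono hsub).fun_sub
        ((hasDerivWithinAt_id v (uIcc x t)).const_mul (f'' x))
    calc ‖f' u - f' x - f'' x * (u - x)‖ = ‖(f' u - f'' x * u) - (f' x - f'' x * x)‖ := by
          congr 1; ring
      _ ≤ η * ‖u - x‖ := (convex_uIcc x t).norm_image_sub_le_of_norm_hasDerivWithin_le
          hderiv hη left_mem_uIcc hu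
      _ ≤ η * |t - x| := mul_le_mul_of_nonneg_left (abs_sub_left_of_mem_uIcc hu) hη0
  have hderiv : ∀ u ∈ uIcc x t,
      HasDerivWithinAt (fun u => f u - f' x * u - f'' x / 2 * (u - x) ^ 2)
        (f' u - f' x - f'' x * (u - x)) (uIcc x t) u := fun u hu => by
    have hlin := (hasDerivWithinAt_id u (uIcc x t)).const_mul (f' x)
    have hquad :=
      (((hasDerivWithinAt_id u (uIcc x t)).sub_const x).fun_pow 2).const_mul (f'' x / 2)
    refine ((((hf' u (hsub hu)).mono hsub).fun_sub hlin).fun_sub hquad).congr_deriv ?_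
    simp only [id_eq, mul_one, Nat.cast_ofNat, Nat.add_one_sub_one, pow_one]
    ring
  calc |f t - f x - f' x * (t - x) - f'' x / 2 * (t - x) ^ 2|
      = ‖(f t - f' x * t - f'' x / 2 * (t - x) ^ 2)
          - (f x - f' x * x - f'' x / 2 * (x - x) ^ 2)‖ := by
        rw [Real.norm_eq_abs]; congr 1; ring
    _ ≤ η * |t - x| * ‖t - x‖ := (convex_uIcc x t).norm_image_sub_le_of_norm_hasDerivWithin_le
        hderiv hfirst left_mem_uIcc right_mem_uIcc
    _ = η * (t - x) ^ 2 := by rw [Real.norm_eq_abs, mul_assoc, abs_mul_abs_self]; ring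

lemma exists_forall_abs_sub_taylor_two_le [s.OrdConnected] (hs : IsCompact s)
    (hf' : ∀ y ∈ s, HasDerivWithinAt f (f' y) s y)
    (hf'' : ∀ y ∈ s, HasDerivWithinAt f' (f'' y) s y) (hcont : ContinuousOn f'' s)
    {η : ℝ} (hη : 0 < η) :
    ∃ C ≥ 0, ∀ x ∈ s, ∀ t ∈ s, |f t - f x - f' x * (t - x) - f'' x / 2 * (t - x) ^ 2|
      ≤ η * (t - x) ^ 2 + C * (t - x) ^ 4 := by
  obtain ⟨K, hK⟩ := hs.exists_bound_of_continuousOn hcont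
  obtain ⟨δ, hδ, hfδ⟩ :=
    Metric.uniformContinuousOn_iff.mp (hs.uniformContinuousOn_of_continuous hcont) η hη
  refine ⟨2 * |K| / δ ^ 2, by positivity, fun x hx t ht => ?_⟩
  have hsub : uIcc x t ⊆ s := OrdConnected.uIcc_subset ‹_› hx ht
  rcases lt_or_ge |t - x| δ with hnear | hfar
  · have htaylor := abs_sub_taylor_two_le hf' hf'' hx ht fun u hu =>
      (hfδ u (hsub hu) x hx ((abs_sub_left_of_mem_uIcc hu).trans_lt hnear)).le
    exact htaylor.trans (le_add_of_nonneg_right (by positivity))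
  · have htaylor := abs_sub_taylor_two_le (η := 2 * |K|) hf' hf'' hx ht fun u hu => by
      have hu' : |f'' u| ≤ |K| := (hK u (hsub hu)).trans (le_abs_self K)
      have hx' : |f'' x| ≤ |K| := (hK x hx).trans (le_abs_self K)
      linarith [abs_sub (f'' u) (f'' x)]
    have hratio : 1 ≤ (t - x) ^ 2 / δ ^ 2 := by
      rw [one_le_div (by positivity), ← sq_abs (t - x)]
      gcongr
    calc _ ≤ 2 * |K| * (t - x) ^ 2 := htaylor
      _ ≤ 2 * |K| * (t - x) ^ 2 * ((t - x) ^ 2 / δ ^ 2) :=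
        le_mul_of_one_le_right (by positivity) hratio
      _ = 2 * |K| / δ ^ 2 * (t - x) ^ 4 := by ring
      _ ≤ η * (t - x) ^ 2 + 2 * |K| / δ ^ 2 * (t - x) ^ 4 :=
        le_add_of_nonneg_left (by positivity)

end Taylor

section Voronovskaja

variable {s : Set ℝ}

lemma integrable_of_continuousOn_of_ae_mem {X E : Type*} [TopologicalSpace X] [T2Space X]
    [MeasurableSpace X] [OpensMeasurableSpace X] [NormedAddCommGroup E] {s : Set X}
    {ν : Measure X} [IsFiniteMeasureOnCompacts ν] {g : X → E}
    (hs : IsCompact s) (hν : ∀ᵐ t ∂ν, t ∈ s) (hg : ContinuousOn g s) : Integrable g ν := by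
  rw [← Measure.restrict_eq_self_of_ae_mem hν]
  exact hg.integrableOn_compact hs

lemma integral_sub_pow_eq_sum {ν : Measure ℝ} [IsProbabilityMeasure ν] (x : ℝ) {k : ℕ}
    (hk : k ≠ 0) (hν : ∀ j ≤ k, Integrable (fun t => t ^ j) ν) :
    ∫ t, (t - x) ^ k ∂ν =
      ∑ j ∈ Finset.range (k + 1), (-x) ^ (k - j) * k.choose j * (∫ t, t ^ j ∂ν - x ^ j) := by
  have hzero : ∑ j ∈ Finset.range (k + 1), (-x) ^ (k - j) * k.choose j * x ^ j = 0 := by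
    calc _ = (x + -x) ^ k := by
          rw [add_pow]
          exact Finset.sum_congr rfl fun j _ => by ring
      _ = 0 := by rw [add_neg_cancel, zero_pow hk]
  simp only [mul_sub, Finset.sum_sub_distrib, hzero, sub_zero, ← integral_const_mul]
  rw [← integral_finsetSum _ fun j hj =>
    (hν j (Nat.lt_succ_iff.mp (Finset.mem_range.mp hj))).const_mul _]
  congr 1 with t
  rw [sub_eq_add_neg, add_pow]
  exact Finset.sum_congr rfl fun j _ => by ring

variable {ι : Type*} {l : Filter ι} {μ : ι → ℝ → Measure ℝ} {r : ι → ℝ} {b σ : ℝ → ℝ}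

lemma tendstoUniformlyOn_central_moment {k : ℕ} (hk : k ≠ 0) (hs : IsCompact s)
    (hμ : ∀ i, ∀ x ∈ s, IsProbabilityMeasure (μ i x)) (hμs : ∀ i, ∀ x ∈ s, ∀ᵐ t ∂μ i x, t ∈ s)
    (hb : ContinuousOn b s) (hσ : ContinuousOn σ s)
    (hmom : ∀ j ≤ k, TendstoUniformlyOn (fun i x => r i * (∫ t, t ^ j ∂μ i x - x ^ j))
      (fun x => j * x ^ (j - 1) * b x + j * (j - 1) * x ^ (j - 2) * σ x) l s) :
    TendstoUniformlyOn (fun i x => r i * ∫ t, (t - x) ^ k ∂μ i x)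
      (fun x => ∑ j ∈ Finset.range (k + 1), (-x) ^ (k - j) * k.choose j *
        (j * x ^ (j - 1) * b x + j * (j - 1) * x ^ (j - 2) * σ x)) l s := by
  have hterm : ∀ j ∈ Finset.range (k + 1), TendstoUniformlyOn
      (fun i x => (-x) ^ (k - j) * k.choose j * (r i * (∫ t, t ^ j ∂μ i x - x ^ j)))
      (fun x => (-x) ^ (k - j) * k.choose j *
        (j * x ^ (j - 1) * b x + j * (j - 1) * x ^ (j - 2) * σ x)) l s := fun j hj =>
    tendstoUniformlyOn_continuousOn_mul hs (by fun_prop)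
      (hmom j (Nat.lt_succ_iff.mp (Finset.mem_range.mp hj))) (by fun_prop)
  refine (tendstoUniformlyOn_finsetSum hterm).congr (.of_forall fun i x hx => ?_)
  have := hμ i x hx
  have hint := fun j (_ : j ≤ k) => integrable_of_continuousOn_of_ae_mem hs (hμs i x hx)
    (continuous_pow j).continuousOn
  simp only [integral_sub_pow_eq_sum x hk hint, Finset.mul_sum]
  exact Finset.sum_congr rfl fun j _ => by ring

lemma tendstoUniformlyOn_taylor_remainder [s.OrdConnected] (hs : IsCompact s)
    (hμ : ∀ i, ∀ x ∈ s, IsProbabilityMeasure (μ i x)) (hμs : ∀ i, ∀ x ∈ s, ∀ᵐ t ∂μ i x, t ∈ s)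
    (hσ : ContinuousOn σ s)
    (hsecond : TendstoUniformlyOn (fun i x => r i * ∫ t, (t - x) ^ 2 ∂μ i x) σ l s)
    (hfourth : TendstoUniformlyOn (fun i x => r i * ∫ t, (t - x) ^ 4 ∂μ i x) (fun _ => 0) l s)
    {f f' f'' : ℝ → ℝ} (hf' : ∀ y ∈ s, HasDerivWithinAt f (f' y) s y)
    (hf'' : ∀ y ∈ s, HasDerivWithinAt f' (f'' y) s y) (hcont : ContinuousOn f'' s) :
    TendstoUniformlyOn (fun i x => r i *
        ∫ t, (f t - f x - f' x * (t - x) - f'' x / 2 * (t - x) ^ 2) ∂μ i x)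
      (fun _ => 0) l s := by
  refine tendstoUniformlyOn_zero_of_abs_le
    (exists_eventually_abs_le_of_tendstoUniformlyOn hs hσ hsecond) hfourth fun η hη => ?_
  obtain ⟨C, hC, htaylor⟩ := exists_forall_abs_sub_taylor_two_le hs hf' hf'' hcont hη
  refine ⟨C, hC, fun i x hx => ?_⟩
  have := hμ i x hx
  have hint : ∀ k : ℕ, Integrable (fun t => (t - x) ^ k) (μ i x) := fun k =>
    integrable_of_continuousOn_of_ae_mem hs (hμs i x hx) (by fun_prop)
  have hbound : |∫ t, (f t - f x - f' x * (t - x) - f'' x / 2 * (t - x) ^ 2) ∂μ i x|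
      ≤ η * ∫ t, (t - x) ^ 2 ∂μ i x + C * ∫ t, (t - x) ^ 4 ∂μ i x := by
    have hsecond := (hint 2).const_mul η
    have hfourth := (hint 4).const_mul C
    rw [← integral_const_mul η, ← integral_const_mul C, ← integral_add hsecond hfourth,
      ← Real.norm_eq_abs]
    exact norm_integral_le_of_norm_le (hsecond.fun_add hfourth)
      ((hμs i x hx).mono fun t ht => htaylor x hx t ht)
  calc _ ≤ |r i| * (η * ∫ t, (t - x) ^ 2 ∂μ i x + C * ∫ t, (t - x) ^ 4 ∂μ i x) := by
        rw [abs_mul]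
        gcongr
    _ ≤ |r i| * (η * |∫ t, (t - x) ^ 2 ∂μ i x| + C * |∫ t, (t - x) ^ 4 ∂μ i x|) := by
        gcongr <;> exact le_abs_self _
    _ = _ := by
        rw [abs_mul, abs_mul]
        ring

lemma integral_sub_eq_taylor_two {ν : Measure ℝ} [IsProbabilityMeasure ν] {f : ℝ → ℝ}
    (hs : IsCompact s) (hν : ∀ᵐ t ∂ν, t ∈ s) (hf : ContinuousOn f s) (x p q : ℝ) :
    ∫ t, f t ∂ν - f x = p * ∫ t, (t - x) ∂ν + q * ∫ t, (t - x) ^ 2 ∂ν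
      + ∫ t, (f t - f x - p * (t - x) - q * (t - x) ^ 2) ∂ν := by
  have hint : ∀ g : ℝ → ℝ, ContinuousOn g s → Integrable g ν := fun g =>
    integrable_of_continuousOn_of_ae_mem hs hν
  have hsub : Integrable (fun t => f t - f x) ν := hint _ (by fun_prop)
  have hlin : Integrable (fun t => p * (t - x)) ν := hint _ (by fun_prop)
  have hquad : Integrable (fun t => q * (t - x) ^ 2) ν := hint _ (by fun_prop)
  rw [integral_sub (hsub.sub' hlin) hquad, integral_sub hsub hlin,
    integral_sub (hint f hf) (integrable_const _), integral_const_mul, integral_const_mul,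
    integral_const, probReal_univ, one_smul]
  ring

theorem tendstoUniformlyOn_voronovskaja_of_monomials [s.OrdConnected] (hs : IsCompact s)
    (hμ : ∀ i, ∀ x ∈ s, IsProbabilityMeasure (μ i x)) (hμs : ∀ i, ∀ x ∈ s, ∀ᵐ t ∂μ i x, t ∈ s)
    (hb : ContinuousOn b s) (hσ : ContinuousOn σ s)
    (hmom : ∀ j : ℕ, j ≤ 4 → TendstoUniformlyOn (fun i x => r i * (∫ t, t ^ j ∂μ i x - x ^ j))
      (fun x => j * x ^ (j - 1) * b x + j * (j - 1) * x ^ (j - 2) * σ x) l s)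
    {f f' f'' : ℝ → ℝ} (hf' : ∀ y ∈ s, HasDerivWithinAt f (f' y) s y)
    (hf'' : ∀ y ∈ s, HasDerivWithinAt f' (f'' y) s y) (hcont : ContinuousOn f'' s) :
    TendstoUniformlyOn (fun i x => r i * (∫ t, f t ∂μ i x - f x))
      (fun x => f' x * b x + f'' x * σ x) l s := by
  have hcontf : ContinuousOn f s := fun y hy => (hf' y hy).continuousWithinAt
  have hcontf' : ContinuousOn f' s := fun y hy => (hf'' y hy).continuousWithinAt
  have hcentral := fun (k : ℕ) (hk : k ≠ 0) (hk4 : k ≤ 4) =>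
    tendstoUniformlyOn_central_moment hk hs hμ hμs hb hσ fun j hj => hmom j (hj.trans hk4)
  have hfirst : TendstoUniformlyOn (fun i x => r i * ∫ t, (t - x) ^ 1 ∂μ i x) b l s :=
    (hcentral 1 (by norm_num) (by norm_num)).congr_right fun x _ => by
      simp [Finset.sum_range_succ]
  have hsecond : TendstoUniformlyOn (fun i x => r i * ∫ t, (t - x) ^ 2 ∂μ i x)
      (fun x => 2 * σ x) l s :=
    (hcentral 2 (by norm_num) (by norm_num)).congr_right fun x _ => by
      simp only [Finset.sum_range_succ, Finset.sum_range_zero, Nat.choose, Nat.reduceAdd,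
        Nat.reduceSub]
      push_cast
      ring
  have hfourth : TendstoUniformlyOn (fun i x => r i * ∫ t, (t - x) ^ 4 ∂μ i x)
      (fun _ => 0) l s :=
    (hcentral 4 (by norm_num) (by norm_num)).congr_right fun x _ => by
      simp only [Finset.sum_range_succ, Finset.sum_range_zero, Nat.choose, Nat.reduceAdd,
        Nat.reduceSub]
      push_cast
      ring
  have hremainder := tendstoUniformlyOn_taylor_remainder hs hμ hμs (continuousOn_const.mul hσ)
    hsecond hfourth hf' hf'' hcont
  have hlinear := tendstoUniformlyOn_continuousOn_mul hs hcontf' hfirst hb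
  have hquadratic := tendstoUniformlyOn_continuousOn_mul hs (hcont.div_const 2) hsecond
    (continuousOn_const.mul hσ)
  refine (((hlinear.fun_add hquadratic).fun_add hremainder).congr
    (.of_forall fun i x hx => ?_)).congr_right fun x _ => by ring
  have := hμ i x hx
  rw [integral_sub_eq_taylor_two hs (hμs i x hx) hcontf x (f' x) (f'' x / 2)]
  simp only [pow_one]
  ring

end Voronovskaja

section BernsteinPolynomial

lemma eval_bernsteinPolynomial {R : Type*} [CommRing R] (n k : ℕ) (x : R) :
    (bernsteinPolynomial R n k).eval x = n.choose k * x ^ k * (1 - x) ^ (n - k) := by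
  simp [bernsteinPolynomial]

lemma eval_bernsteinPolynomial_nonneg (n k : ℕ) {x : ℝ} (hx : x ∈ Icc 0 1) :
    0 ≤ (bernsteinPolynomial ℝ n k).eval x := by
  rw [eval_bernsteinPolynomial]
  exact mul_nonneg (mul_nonneg (Nat.cast_nonneg _) (pow_nonneg hx.1 _))
    (pow_nonneg (sub_nonneg.mpr hx.2) _)

lemma sum_eval_bernsteinPolynomial {R : Type*} [CommRing R] (n : ℕ) (x : R) :
    ∑ k ∈ Finset.range (n + 1), (bernsteinPolynomial R n k).eval x = 1 := by
  rw [← Polynomial.eval_finsetSum, bernsteinPolynomial.sum, Polynomial.eval_one]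

lemma succ_mul_eval_bernsteinPolynomial_succ_succ {R : Type*} [CommRing R] (n k : ℕ) (x : R) :
    (k + 1) * (bernsteinPolynomial R (n + 1) (k + 1)).eval x =
      (n + 1) * x * (bernsteinPolynomial R n k).eval x := by
  have hchoose : ((n : R) + 1) * n.choose k = (n + 1).choose (k + 1) * (k + 1) := by
    exact_mod_cast congrArg (Nat.cast (R := R)) (Nat.add_one_mul_choose_eq n k)
  rw [eval_bernsteinPolynomial, eval_bernsteinPolynomial, Nat.add_sub_add_right, pow_succ]
  linear_combination -(x ^ k * x * (1 - x) ^ (n - k)) * hchoose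

lemma sum_mul_eval_bernsteinPolynomial_succ {R : Type*} [CommRing R] (n : ℕ) (x : R)
    (c : ℕ → R) :
    ∑ k ∈ Finset.range (n + 2), k * (bernsteinPolynomial R (n + 1) k).eval x * c k =
      (n + 1) * x * ∑ k ∈ Finset.range (n + 1),
        (bernsteinPolynomial R n k).eval x * c (k + 1) := by
  rw [Finset.sum_range_succ', Finset.mul_sum]
  push_cast
  simp only [succ_mul_eval_bernsteinPolynomial_succ_succ, zero_mul, add_zero, mul_assoc]

lemma integral_eval_bernsteinPolynomial {n k : ℕ} (hk : k ≤ n) :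
    ∫ t in (0 : ℝ)..1, (bernsteinPolynomial ℝ n k).eval t = ((n : ℝ) + 1)⁻¹ := by
  have hint (j : ℕ) : IntervalIntegrable (fun t => (bernsteinPolynomial ℝ n j).eval t)
      volume 0 1 := (bernsteinPolynomial ℝ n j).continuous.intervalIntegrable 0 1
  have hstep (j : ℕ) : ((n : ℝ) + 1) * ((∫ t in (0 : ℝ)..1, (bernsteinPolynomial ℝ n j).eval t)
      - ∫ t in (0 : ℝ)..1, (bernsteinPolynomial ℝ n (j + 1)).eval t) =
      if j = n then 1 else 0 := by
    have hftc := intervalIntegral.integral_eq_sub_of_hasDerivAt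
      (fun t _ => (bernsteinPolynomial ℝ (n + 1) (j + 1)).hasDerivAt t)
      (Polynomial.continuous _ |>.intervalIntegrable 0 1)
    simpa [bernsteinPolynomial.derivative_succ, intervalIntegral.integral_sub (hint j) (hint _),
      bernsteinPolynomial.eval_at_0, bernsteinPolynomial.eval_at_1, eq_comm] using hftc
  induction hk using Nat.decreasingInduction with
  | self =>
    have := hstep n
    rw [bernsteinPolynomial.eq_zero_of_lt ℝ n.lt_succ_self] at this
    simp only [Polynomial.eval_zero, intervalIntegral.integral_zero, sub_zero, if_true] at this
    exact eq_inv_of_mul_eq_one_right this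
  | of_succ j hj ih =>
    have := hstep j
    rw [if_neg hj.ne, mul_eq_zero_iff_left (by positivity), sub_eq_zero] at this
    exact this.trans ih

end BernsteinPolynomial

section JacobiDurrmeyer

/-- The kernel of the Bernstein–Durrmeyer operator `f ↦ ∑ k, p_{m,k} ⟨p_{m,k}, f⟩ / ⟨p_{m,k}, 1⟩`
for the inner product with the Jacobi weight `t ^ α * (1 - t) ^ β`. The weighted basis function
`p_{m,k}(t) t ^ α (1 - t) ^ β` is a multiple of `p_{m+α+β,k+α}(t)`, whose integral over `[0, 1]`
is `1 / (m + α + β + 1)`. -/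
noncomputable def jacobiDurrmeyerKernel (α β m : ℕ) (x t : ℝ) : ℝ :=
  (m + α + β + 1) * ∑ k ∈ Finset.range (m + 1),
    (bernsteinPolynomial ℝ m k).eval x * (bernsteinPolynomial ℝ (m + α + β) (k + α)).eval t

/-- The probability measure on `[0, 1]` against which the Jacobi-weighted Bernstein–Durrmeyer
operator of degree `m` integrates `f` to produce its value at `x ∈ [0, 1]`. -/
noncomputable def jacobiDurrmeyerMeasure (α β m : ℕ) (x : ℝ) : Measure ℝ :=
  (volume.restrict (Icc 0 1)).withDensity fun t =>
    ENNReal.ofReal (jacobiDurrmeyerKernel α β m x t)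

variable {α β m : ℕ} {x : ℝ}

@[fun_prop]
lemma continuous_jacobiDurrmeyerKernel : Continuous (jacobiDurrmeyerKernel α β m x) := by
  unfold jacobiDurrmeyerKernel
  fun_prop

lemma jacobiDurrmeyerKernel_nonneg (hx : x ∈ Icc 0 1) {t : ℝ} (ht : t ∈ Icc 0 1) :
    0 ≤ jacobiDurrmeyerKernel α β m x t :=
  mul_nonneg (by positivity) <| Finset.sum_nonneg fun k _ =>
    mul_nonneg (eval_bernsteinPolynomial_nonneg m k hx) (eval_bernsteinPolynomial_nonneg _ _ ht)

lemma integral_jacobiDurrmeyerKernel :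
    ∫ t in (0 : ℝ)..1, jacobiDurrmeyerKernel α β m x t = 1 := by
  have hterm : ∀ k ∈ Finset.range (m + 1), ∫ t in (0 : ℝ)..1, (bernsteinPolynomial ℝ m k).eval x *
      (bernsteinPolynomial ℝ (m + α + β) (k + α)).eval t =
      (bernsteinPolynomial ℝ m k).eval x * ((m : ℝ) + α + β + 1)⁻¹ := fun k hk => by
    have hkm : k + α ≤ m + α + β := by
      have := Finset.mem_range.mp hk
      omega
    rw [intervalIntegral.integral_const_mul, integral_eval_bernsteinPolynomial hkm]
    push_cast
    rfl
  unfold jacobiDurrmeyerKernel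
  rw [intervalIntegral.integral_const_mul, intervalIntegral.integral_finsetSum
    fun k _ => Continuous.intervalIntegrable (by fun_prop) 0 1, Finset.sum_congr rfl hterm,
    ← Finset.sum_mul, sum_eval_bernsteinPolynomial, one_mul, mul_inv_cancel₀ (by positivity)]

lemma mul_jacobiDurrmeyerKernel_succ (α β m : ℕ) (x t : ℝ) :
    (m + α + β + 3) * (t * jacobiDurrmeyerKernel α β (m + 1) x t) =
      (α + 1) * jacobiDurrmeyerKernel (α + 1) β (m + 1) x t +
        (m + 1) * x * jacobiDurrmeyerKernel (α + 2) β m x t := by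
  have hterm (k : ℕ) : ((m : ℝ) + α + β + 2) * (t *
        (bernsteinPolynomial ℝ (m + 1 + α + β) (k + α)).eval t) =
      (α + 1 + k) * (bernsteinPolynomial ℝ (m + α + β + 2) (k + α + 1)).eval t := by
    have := succ_mul_eval_bernsteinPolynomial_succ_succ (m + 1 + α + β) (k + α) t
    rw [show m + 1 + α + β + 1 = m + α + β + 2 by omega] at this
    push_cast at this
    linarith
  have hshift := sum_mul_eval_bernsteinPolynomial_succ m x
    fun k => (bernsteinPolynomial ℝ (m + α + β + 2) (k + α + 1)).eval t
  simp only [Nat.add_right_comm _ 1 α] at hshift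
  have hsum : ((m : ℝ) + α + β + 2) * (t * ∑ k ∈ Finset.range (m + 2),
      (bernsteinPolynomial ℝ (m + 1) k).eval x *
        (bernsteinPolynomial ℝ (m + 1 + α + β) (k + α)).eval t) =
      (α + 1) * ∑ k ∈ Finset.range (m + 2), (bernsteinPolynomial ℝ (m + 1) k).eval x *
        (bernsteinPolynomial ℝ (m + α + β + 2) (k + α + 1)).eval t +
      (m + 1) * x * ∑ k ∈ Finset.range (m + 1), (bernsteinPolynomial ℝ m k).eval x *
        (bernsteinPolynomial ℝ (m + α + β + 2) (k + α + 2)).eval t := by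
    rw [← hshift, Finset.mul_sum, Finset.mul_sum, Finset.mul_sum, ← Finset.sum_add_distrib]
    refine Finset.sum_congr rfl fun k _ => ?_
    linear_combination (bernsteinPolynomial ℝ (m + 1) k).eval x * hterm k
  unfold jacobiDurrmeyerKernel
  rw [show m + 1 + (α + 1) + β = m + α + β + 2 by omega,
    show m + (α + 2) + β = m + α + β + 2 by omega]
  push_cast
  simp only [← add_assoc]
  linear_combination ((m : ℝ) + α + β + 3) * hsum

lemma ae_mem_Icc_jacobiDurrmeyerMeasure :
    ∀ᵐ t ∂jacobiDurrmeyerMeasure α β m x, t ∈ Icc (0 : ℝ) 1 :=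
  (withDensity_absolutelyContinuous _ _).ae_le (ae_restrict_mem measurableSet_Icc)

lemma integral_jacobiDurrmeyerMeasure (hx : x ∈ Icc 0 1) (f : ℝ → ℝ) :
    ∫ t, f t ∂jacobiDurrmeyerMeasure α β m x =
      ∫ t in (0 : ℝ)..1, jacobiDurrmeyerKernel α β m x t * f t := by
  have hmeas : Measurable fun t => ENNReal.ofReal (jacobiDurrmeyerKernel α β m x t) :=
    continuous_jacobiDurrmeyerKernel.measurable.ennreal_ofReal
  rw [jacobiDurrmeyerMeasure, integral_withDensity_eq_integral_toReal_smul hmeas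
    (.of_forall fun _ => ENNReal.ofReal_lt_top), intervalIntegral.integral_of_le zero_le_one,
    ← integral_Icc_eq_integral_Ioc]
  refine setIntegral_congr_fun measurableSet_Icc fun t ht => ?_
  simp [ENNReal.toReal_ofReal (jacobiDurrmeyerKernel_nonneg hx ht)]

lemma integral_jacobiDurrmeyerMeasure_eq_sum (hx : x ∈ Icc 0 1) {f : ℝ → ℝ}
    (hf : IntervalIntegrable f volume 0 1) :
    ∫ t, f t ∂jacobiDurrmeyerMeasure α β m x =
      (m + α + β + 1) * ∑ k ∈ Finset.range (m + 1), (bernsteinPolynomial ℝ m k).eval x *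
        ∫ t in (0 : ℝ)..1, (bernsteinPolynomial ℝ (m + α + β) (k + α)).eval t * f t := by
  simp only [integral_jacobiDurrmeyerMeasure hx, jacobiDurrmeyerKernel, mul_assoc, Finset.sum_mul,
    intervalIntegral.integral_const_mul]
  rw [intervalIntegral.integral_finsetSum fun k _ =>
    (hf.continuousOn_mul (Polynomial.continuous _).continuousOn).const_mul _]
  simp only [intervalIntegral.integral_const_mul]

lemma isProbabilityMeasure_jacobiDurrmeyerMeasure (hx : x ∈ Icc 0 1) :
    IsProbabilityMeasure (jacobiDurrmeyerMeasure α β m x) := by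
  constructor
  have hint : IntegrableOn (jacobiDurrmeyerKernel α β m x) (Icc 0 1) :=
    continuous_jacobiDurrmeyerKernel.continuousOn.integrableOn_compact isCompact_Icc
  rw [jacobiDurrmeyerMeasure, withDensity_apply _ .univ, Measure.restrict_univ,
    ← ofReal_integral_eq_lintegral_ofReal hint
      (ae_restrict_of_forall_mem measurableSet_Icc fun t => jacobiDurrmeyerKernel_nonneg hx),
    integral_Icc_eq_integral_Ioc, ← intervalIntegral.integral_of_le zero_le_one,
    integral_jacobiDurrmeyerKernel, ENNReal.ofReal_one]

lemma integral_pow_succ_jacobiDurrmeyerMeasure_succ (hx : x ∈ Icc 0 1) (j : ℕ) :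
    (m + α + β + 3) * ∫ t, t ^ (j + 1) ∂jacobiDurrmeyerMeasure α β (m + 1) x =
      (α + 1) * ∫ t, t ^ j ∂jacobiDurrmeyerMeasure (α + 1) β (m + 1) x +
        (m + 1) * x * ∫ t, t ^ j ∂jacobiDurrmeyerMeasure (α + 2) β m x := by
  simp only [integral_jacobiDurrmeyerMeasure hx, ← intervalIntegral.integral_const_mul]
  rw [← intervalIntegral.integral_add]
  · congr 1 with t
    linear_combination t ^ j * mul_jacobiDurrmeyerKernel_succ α β m x t
  all_goals exact Continuous.intervalIntegrable (by fun_prop) 0 1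

end JacobiDurrmeyer

section Moments

lemma succ_mul_integral_pow_succ_jacobiDurrmeyerMeasure_sub {α β m : ℕ} {x : ℝ}
    (hx : x ∈ Icc 0 1) (j : ℕ) :
    ((m + 1 : ℕ) + 1) * (∫ t, t ^ (j + 1) ∂jacobiDurrmeyerMeasure α β (m + 1) x - x ^ (j + 1)) =
      (m + 2) / (m + α + β + 3) *
        ((α + 1) * ∫ t, t ^ j ∂jacobiDurrmeyerMeasure (α + 1) β (m + 1) x +
          x * ((m + 1) * (∫ t, t ^ j ∂jacobiDurrmeyerMeasure (α + 2) β m x - x ^ j)) -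
          (α + β + 2) * x ^ (j + 1)) := by
  have hrec := integral_pow_succ_jacobiDurrmeyerMeasure_succ (α := α) (β := β) (m := m) hx j
  field_simp
  push_cast
  linear_combination (m + 2 : ℝ) * hrec

theorem tendstoUniformlyOn_pow_jacobiDurrmeyerMeasure (α β j : ℕ) :
    TendstoUniformlyOn
      (fun (m : ℕ) x => ((m : ℝ) + 1) * (∫ t, t ^ j ∂jacobiDurrmeyerMeasure α β m x - x ^ j))
      (fun x => j * x ^ (j - 1) * (α + 1 - (α + β + 2) * x) +
        j * (j - 1) * x ^ (j - 2) * (x * (1 - x))) atTop (Icc 0 1) := by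
  induction j generalizing α β with
  | zero =>
    refine (tendstoUniformlyOn_self fun _ => (0 : ℝ)).congr (.of_forall fun m x hx => ?_)
      |>.congr_right fun x _ => by simp
    have := isProbabilityMeasure_jacobiDurrmeyerMeasure (α := α) (β := β) (m := m) hx
    simp
  | succ j ih =>
    have hfactor : Tendsto (fun m : ℕ => ((m : ℝ) + 2) / (m + α + β + 3)) atTop (𝓝 1) := by
      simpa [add_comm, add_left_comm, add_assoc] using
        tendsto_add_mul_div_add_mul_atTop_nhds (2 : ℝ) (α + β + 3) 1 one_ne_zero
    have hmoment := tendstoUniformlyOn_of_atTop_mul_sub isCompact_Icc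
      (tendsto_atTop_add_const_right _ 1 tendsto_natCast_atTop_atTop) (by fun_prop)
      (ih (α + 1) β)
    have hlower := tendstoUniformlyOn_continuousOn_mul isCompact_Icc (c := fun _ => (α : ℝ) + 1)
      (by fun_prop) (tendstoUniformlyOn_add_one_iff.mpr hmoment) (by fun_prop)
    have herror := tendstoUniformlyOn_continuousOn_mul isCompact_Icc (c := fun x => x)
      (by fun_prop) (ih (α + 2) β) (by fun_prop)
    have hbracket := (hlower.fun_add herror).fun_sub
      (tendstoUniformlyOn_self fun x => ((α : ℝ) + β + 2) * x ^ (j + 1))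
    rw [← tendstoUniformlyOn_add_one_iff]
    refine (tendstoUniformlyOn_mul_of_isCompact isCompact_Icc
      (hfactor.tendstoUniformlyOn_const _) hbracket (by fun_prop) (by fun_prop)).congr
        (.of_forall fun m x hx =>
          (succ_mul_integral_pow_succ_jacobiDurrmeyerMeasure_sub hx j).symm)
      |>.congr_right fun x _ => ?_
    rcases j with _ | _ | j <;> push_cast [Nat.add_sub_cancel] <;> ring

theorem tendstoUniformlyOn_voronovskaja_jacobiDurrmeyerMeasure (α β : ℕ) {f f' f'' : ℝ → ℝ}
    (hf' : ∀ y ∈ Icc (0 : ℝ) 1, HasDerivWithinAt f (f' y) (Icc 0 1) y)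
    (hf'' : ∀ y ∈ Icc (0 : ℝ) 1, HasDerivWithinAt f' (f'' y) (Icc 0 1) y)
    (hcont : ContinuousOn f'' (Icc 0 1)) :
    TendstoUniformlyOn
      (fun (m : ℕ) x => ((m : ℝ) + 1) * (∫ t, f t ∂jacobiDurrmeyerMeasure α β m x - f x))
      (fun x => f' x * (α + 1 - (α + β + 2) * x) + f'' x * (x * (1 - x))) atTop (Icc 0 1) :=
  tendstoUniformlyOn_voronovskaja_of_monomials isCompact_Icc
    (fun _ _ => isProbabilityMeasure_jacobiDurrmeyerMeasure)
    (fun _ _ _ => ae_mem_Icc_jacobiDurrmeyerMeasure) (by fun_prop) (by fun_prop)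
    (fun j _ => tendstoUniformlyOn_pow_jacobiDurrmeyerMeasure α β j) hf' hf'' hcont

end Moments

section ModifiedDurrmeyer

lemma bern_natCast (n k : ℕ) (x : ℝ) : bern n k x = (bernsteinPolynomial ℝ n k).eval x := by
  rw [eval_bernsteinPolynomial, bern]
  split_ifs with h
  · rw [Int.toNat_natCast]
  · rw [Nat.choose_eq_zero_of_lt (by omega), Nat.cast_zero, zero_mul, zero_mul]

lemma bern_neg_one (n : ℕ) (x : ℝ) : bern n (-1) x = 0 :=
  if_neg (by omega)

lemma sum_pM1_mul (a0 a1 : ℕ → ℝ) (m : ℕ) (x : ℝ) (I : ℕ → ℝ) :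
    ∑ k ∈ Finset.range (m + 2), pM1 a0 a1 (m + 1) k x * I k =
      (a1 (m + 1) * x + a0 (m + 1)) *
        ∑ k ∈ Finset.range (m + 1), (bernsteinPolynomial ℝ m k).eval x * I k +
      (a1 (m + 1) * (1 - x) + a0 (m + 1)) *
        ∑ k ∈ Finset.range (m + 1), (bernsteinPolynomial ℝ m k).eval x * I (k + 1) := by
  have hleft : ∑ k ∈ Finset.range (m + 2), bern m k x * I k =
      ∑ k ∈ Finset.range (m + 1), (bernsteinPolynomial ℝ m k).eval x * I k := by
    simp only [bern_natCast]
    rw [Finset.sum_range_succ, bernsteinPolynomial.eq_zero_of_lt ℝ m.lt_succ_self,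
      Polynomial.eval_zero, zero_mul, add_zero]
  have hright : ∑ k ∈ Finset.range (m + 2), bern m (k - 1) x * I k =
      ∑ k ∈ Finset.range (m + 1), (bernsteinPolynomial ℝ m k).eval x * I (k + 1) := by
    rw [Finset.sum_range_succ']
    simp [bern_natCast, bern_neg_one]
  rw [← hleft, ← hright, Finset.mul_sum, Finset.mul_sum, ← Finset.sum_add_distrib]
  refine Finset.sum_congr rfl fun k _ => ?_
  rw [pM1, Nat.add_sub_cancel]
  ring

lemma DM1_succ_eq (a0 a1 : ℕ → ℝ) (m : ℕ) {f : ℝ → ℝ} (hf : IntervalIntegrable f volume 0 1)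
    {x : ℝ} (hx : x ∈ Icc 0 1) :
    DM1 a0 a1 (m + 1) f x =
      (a1 (m + 1) * x + a0 (m + 1)) * ∫ t, f t ∂jacobiDurrmeyerMeasure 0 1 m x +
        (a1 (m + 1) * (1 - x) + a0 (m + 1)) * ∫ t, f t ∂jacobiDurrmeyerMeasure 1 0 m x := by
  rw [DM1, sum_pM1_mul, integral_jacobiDurrmeyerMeasure_eq_sum hx hf,
    integral_jacobiDurrmeyerMeasure_eq_sum hx hf]
  simp only [bern_natCast, add_zero]
  push_cast
  ring

end ModifiedDurrmeyer

theorem DM1_voronovskaja_positive_case_general (a0 a1 : ℕ → ℝ) (l0 l1 : ℝ)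
    (hl0 : Tendsto a0 atTop (𝓝 l0)) (hl1 : Tendsto a1 atTop (𝓝 l1))
    (hA : ∀ n, 2 * a0 n + a1 n = 1)
    (f f' f'' : ℝ → ℝ)
    (hf' : ∀ y ∈ Set.Icc (0 : ℝ) 1, HasDerivWithinAt f (f' y) (Set.Icc 0 1) y)
    (hf'' : ∀ y ∈ Set.Icc (0 : ℝ) 1, HasDerivWithinAt f' (f'' y) (Set.Icc 0 1) y)
    (hcont : ContinuousOn f'' (Set.Icc 0 1)) :
    TendstoUniformlyOn (fun (n : ℕ) x => (n : ℝ) * (DM1 a0 a1 n f x - f x))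
      (fun x => (1 - 2 * x) * (2 * l1 + 3 * l0) * f' x
        + x * (1 - x) * (2 * l0 + l1) * f'' x) atTop (Set.Icc 0 1) := by
  have hf : IntervalIntegrable f volume 0 1 :=
    ContinuousOn.intervalIntegrable_of_Icc zero_le_one fun y hy => (hf' y hy).continuousWithinAt
  have hcontf' : ContinuousOn f' (Icc 0 1) := fun y hy => (hf'' y hy).continuousWithinAt
  have hweight (c : ℝ → ℝ) (hc : ContinuousOn c (Icc 0 1)) :
      TendstoUniformlyOn (fun m x => a1 (m + 1) * c x + a0 (m + 1)) (fun x => l1 * c x + l0)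
        atTop (Icc 0 1) :=
    tendstoUniformlyOn_add_one_iff.mpr
      (tendstoUniformlyOn_mul_add_of_tendsto isCompact_Icc hl1 hl0 hc)
  have hleft := tendstoUniformlyOn_mul_of_isCompact isCompact_Icc
    (hweight (fun x => x) (by fun_prop))
    (tendstoUniformlyOn_voronovskaja_jacobiDurrmeyerMeasure 0 1 hf' hf'' hcont)
    (by fun_prop) (by fun_prop)
  have hright := tendstoUniformlyOn_mul_of_isCompact isCompact_Icc
    (hweight (fun x => 1 - x) (by fun_prop))
    (tendstoUniformlyOn_voronovskaja_jacobiDurrmeyerMeasure 1 0 hf' hf'' hcont)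
    (by fun_prop) (by fun_prop)
  rw [← tendstoUniformlyOn_add_one_iff]
  refine ((hleft.fun_add hright).congr (.of_forall fun m x hx => ?_)).congr_right fun x _ => ?_
  · simp only [DM1_succ_eq a0 a1 m hf hx]
    push_cast
    linear_combination -((m : ℝ) + 1) * f x * hA (m + 1)
  · push_cast
    ring

theorem DM1_voronovskaja_positive_case (a0 a1 : ℕ → ℝ) (l0 l1 : ℝ)
    (hl0 : Tendsto a0 atTop (𝓝 l0)) (hl1 : Tendsto a1 atTop (𝓝 l1))
    (hA : ∀ n, 2 * a0 n + a1 n = 1)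
    (h0 : ∀ n, 0 ≤ a0 n) (h01 : ∀ n, 0 ≤ a0 n + a1 n)
    (f f' f'' : ℝ → ℝ)
    (hf' : ∀ y ∈ Set.Icc (0:ℝ) 1, HasDerivWithinAt f (f' y) (Set.Icc 0 1) y)
    (hf'' : ∀ y ∈ Set.Icc (0:ℝ) 1, HasDerivWithinAt f' (f'' y) (Set.Icc 0 1) y)
    (hcont : ContinuousOn f'' (Set.Icc 0 1)) :
    TendstoUniformlyOn (fun (n : ℕ) x => (n : ℝ) * (DM1 a0 a1 n f x - f x))
      (fun x => (1 - 2 * x) * (2 * l1 + 3 * l0) * f' x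
        + x * (1 - x) * (2 * l0 + l1) * f'' x) atTop (Set.Icc 0 1) :=
  DM1_voronovskaja_positive_case_general a0 a1 l0 l1 hl0 hl1 hA f f' f'' hf' hf'' hcont
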